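/- Let ℬ ⊆ ℕ be a primitive set, H the closure of the image of the diagonal embedding Δ : ℤ → ∏_{b∈ℬ} ℤ/bℤ with normalized Haar measure m_H, and W_∞ := ⋃_{N∈ℕ} W_{ℬ̃^(N)} where W_{ℬ̃^(N)} := {h ∈ H : h_b ≠ 0 for all b ∈ ℬ with no prime factor ≤ N}. Then lim_{N→∞} δ(M_{ℬ̃^(N)}) = 1 − m_H(W_∞). -/

import Mathlib

open Filter Set Topology MeasureTheory

open scoped Classical

noncomputable section

/-- The diagonal embedding `Δ : ℤ → ∏_{b ∈ B} ℤ/bℤ`. -/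
def diagEmb (B : Set ℕ) : ℤ →+ ((b : B) → ZMod b) where
  toFun n := fun b => (n : ZMod b)
  map_zero' := by ext b; simp
  map_add' m n := by ext b; simp [Int.cast_add]

/-- `H`, the topological closure of `Δ(ℤ)`, as a (closed) subgroup of `∏_{b ∈ B} ℤ/bℤ`. -/
def Hgrp (B : Set ℕ) : AddSubgroup ((b : B) → ZMod b) :=
  (diagEmb B).range.topologicalClosure

instance (B : Set ℕ) [∀ b : B, NeZero (b : ℕ)] : CompactSpace (Hgrp B) :=
  isCompact_iff_compactSpace.mp ((AddSubgroup.isClosed_topologicalClosure _).isCompact)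

instance (B : Set ℕ) : MeasurableSpace (Hgrp B) := borel _

instance (B : Set ℕ) : BorelSpace (Hgrp B) := ⟨rfl⟩

/-- The normalized Haar measure `m_H` on the compact abelian group `H`. -/
def mH (B : Set ℕ) [∀ b : B, NeZero (b : ℕ)] : Measure (Hgrp B) :=
  Measure.addHaarMeasure ⊤

/-- The window `W_{B'} ⊆ H` determined by a subset `B' ⊆ B`. -/
def Wset (B : Set ℕ) (B' : Set ℕ) : Set (Hgrp B) :=
  {h | ∀ b : B, (b : ℕ) ∈ B' → (h : (b : B) → ZMod b) b ≠ 0}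

/-- The set of multiples `M_B ⊆ ℤ` of a set `B ⊆ ℕ`. -/
def multiplesZ (B : Set ℕ) : Set ℤ := {n : ℤ | ∃ b ∈ B, (b : ℤ) ∣ n}

/-- The `B`-free integers `F_B = ℤ ∖ M_B`. -/
def freeZ (B : Set ℕ) : Set ℤ := (multiplesZ B)ᶜ

/-- The logarithmically weighted averages `(1/log n) ∑_{k=1}^n 1_A(k)/k`. -/
def logWeight (A : Set ℤ) (n : ℕ) : ℝ :=
  (Real.log n)⁻¹ * ∑ k ∈ Finset.Icc 1 n, A.indicator (fun m : ℤ => ((m : ℝ))⁻¹) (k : ℤ)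

/-- The lower logarithmic density of a set `A ⊆ ℤ`. -/
def logDensLow (A : Set ℤ) : ℝ := liminf (logWeight A) atTop

/-- `A ⊆ ℤ` has logarithmic density `d`. -/
def HasLogDensity (A : Set ℤ) (d : ℝ) : Prop := Tendsto (logWeight A) atTop (𝓝 d)

/-- `B` is primitive: no element divides another one. -/
def Primitive (B : Set ℕ) : Prop := ∀ b ∈ B, ∀ b' ∈ B, b ∣ b' → b = b'

/-- `B` is Behrend: its set of multiples has logarithmic density one. -/
def IsBehrend (B : Set ℕ) : Prop := logDensLow (multiplesZ B) = 1

/-- `B` is taut: removing any element strictly decreases the logarithmic density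
of the set of multiples. -/
def IsTaut (B : Set ℕ) : Prop :=
  ∀ b ∈ B, logDensLow (multiplesZ (B \ {b})) < logDensLow (multiplesZ B)

/-- `B̃^(N)`: the elements of `B` having no prime factor `≤ N`. -/
def Btilde (B : Set ℕ) (N : ℕ) : Set ℕ := {b ∈ B | ∀ p : ℕ, p.Prime → p ∣ b → N < p}

/-- `B^(N)`: the elements of `B` all of whose prime factors are `≤ N`. -/
def Bsmooth (B : Set ℕ) (N : ℕ) : Set ℕ := {b ∈ B | ∀ p : ℕ, p.Prime → p ∣ b → p ≤ N}

/-! For finite `F ⊆ B` the set `M_F` is periodic, and it is the preimage under `Δ` of the clopen set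
`(W_F)ᶜ ⊆ H`; averaging over one period shows that its density is the Haar measure of `(W_F)ᶜ`. Any
`A ⊆ B` is the increasing union of its truncations `A ∩ [1, N]`, and Haar measure is continuous
along such unions, so it remains to see that logarithmic density is too (Davenport–Erdős).

Let `P_s` be the zeta distribution, `P_s(n) = n⁻ˢ / ζ(s)`. When `t ≤ s`, `n⁻ᵗ` is the Dirichlet
convolution of `n⁻ˢ` with a nonnegative function, so `P_s(M) ≤ P_t(M)` for every set of multiples
`M`. By Abel summation the lower logarithmic density of any set `X` is at most `liminf P_s(X)` as
`s → 1`; applied to the complement of a periodic set of multiples `M`, this and monotonicity give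
`P_s(M) ≤ δ(M)` for all `s > 1`. Hence a bound `u` for the densities of all truncations gives
`P_s(M_A) ≤ u` by continuity of the measure `P_s`, and then `δ(M_A) ≤ u` by Abel summation. -/

open scoped NNReal ENNReal

theorem mul_le_sum_range_mul_of_antitone {R : Type*} [CommRing R] [LinearOrder R]
    [IsStrictOrderedRing R] {e φ : ℕ → R} {K : R} (he : ∀ n, K ≤ ∑ i ∈ Finset.range n, e i)
    (hφ : Antitone φ) (hφ0 : ∀ n, 0 ≤ φ n) (n : ℕ) :
    φ 0 * K ≤ ∑ i ∈ Finset.range n, φ i * e i := by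
  have summation_by_parts : φ 0 * K + φ n * ((∑ i ∈ Finset.range n, e i) - K) ≤
      ∑ i ∈ Finset.range n, φ i * e i := by
    induction n with
    | zero => simp
    | succ n ih =>
      have hstep := mul_le_mul_of_nonneg_right (hφ n.le_succ) (sub_nonneg.2 (he (n + 1)))
      rw [Finset.sum_range_succ] at hstep ⊢
      rw [Finset.sum_range_succ]
      linarith
  linarith [mul_nonneg (hφ0 n) (sub_nonneg.2 (he n))]

theorem sum_range_add_eq_of_periodic {M : Type*} [AddCommGroup M] {f : ℤ → M} {L : ℕ}
    (hf : Function.Periodic f L) (m : ℤ) :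
    ∑ i ∈ Finset.range L, f (m + i) = ∑ i ∈ Finset.range L, f i := by
  have hone : Function.Periodic (fun m : ℤ => ∑ i ∈ Finset.range L, f (m + i)) 1 := fun m => by
    have htel := (Finset.sum_range_succ' (fun i : ℕ => f (m + i)) L).symm.trans
      (Finset.sum_range_succ _ L)
    simpa [hf m, add_assoc, add_comm (1 : ℤ)] using htel
  simpa using hone.int_mul_eq m

theorem exists_norm_sum_range_le_of_periodic {E : Type*} [SeminormedAddCommGroup E] {f : ℤ → E}
    {L : ℕ} (hL : 0 < L) (hf : Function.Periodic f L) (hsum : ∑ i ∈ Finset.range L, f i = 0) :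
    ∃ C, ∀ n : ℕ, ‖∑ i ∈ Finset.range n, f i‖ ≤ C := by
  have hper : Function.Periodic (fun n : ℕ => ‖∑ i ∈ Finset.range n, f i‖) L := fun n => by
    simp [Finset.sum_range_add, sum_range_add_eq_of_periodic hf, hsum]
  obtain ⟨C, hC⟩ := ((Finset.range L).image fun n => ‖∑ i ∈ Finset.range n, f i‖).exists_le
  refine ⟨C, fun n => ?_⟩
  rw [← hper.map_mod_nat n]
  exact hC _ (Finset.mem_image_of_mem _ (Finset.mem_range.2 (n.mod_lt hL)))

/-! ### Logarithmic density -/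

theorem tendsto_log_natCast_atTop : Tendsto (fun n : ℕ => Real.log n) atTop atTop :=
  Real.tendsto_log_atTop.comp tendsto_natCast_atTop_atTop

theorem logWeight_eq_sum_range (A : Set ℤ) (n : ℕ) :
    logWeight A n =
      (Real.log n)⁻¹ * ∑ i ∈ Finset.range n, ((i : ℝ) + 1)⁻¹ * A.indicator 1 ((i : ℤ) + 1) := by
  rw [logWeight, Finset.range_eq_Ico, ← Finset.Ico_add_one_right_eq_Icc,
    ← Finset.sum_Ico_add' _ 0 n 1]
  simp [Set.indicator_apply]

theorem logWeight_nonneg (A : Set ℤ) (n : ℕ) : 0 ≤ logWeight A n := by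
  rw [logWeight_eq_sum_range]
  have := Real.log_natCast_nonneg n
  exact mul_nonneg (by positivity) (Finset.sum_nonneg fun i _ =>
    mul_nonneg (by positivity) (indicator_nonneg (by simp) _))

theorem logWeight_mono {A A' : Set ℤ} (h : A ⊆ A') (n : ℕ) : logWeight A n ≤ logWeight A' n := by
  simp only [logWeight_eq_sum_range]
  have := Real.log_natCast_nonneg n
  gcongr
  exact zero_le_one' ℝ

theorem logWeight_compl (A : Set ℤ) (n : ℕ) :
    logWeight Aᶜ n = logWeight univ n - logWeight A n := by
  simp only [logWeight_eq_sum_range, indicator_compl, Pi.sub_apply, indicator_univ, mul_sub,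
    Finset.sum_sub_distrib]

theorem hasLogDensity_of_abs_sum_range_le {A : Set ℤ} {d C : ℝ}
    (h : ∀ n : ℕ, |∑ i ∈ Finset.range n, (A.indicator 1 ((i : ℤ) + 1) - d)| ≤ C) :
    HasLogDensity A d := by
  have hanti : Antitone fun i : ℕ => ((i : ℝ) + 1)⁻¹ := fun i j hij => by dsimp only; gcongr
  have hzero : Tendsto (fun i : ℕ => ((i : ℝ) + 1)⁻¹) atTop (𝓝 0) := by
    simpa using tendsto_one_div_add_atTop_nhds_zero_nat (𝕜 := ℝ)
  obtain ⟨R, hR⟩ := cauchySeq_tendsto_of_complete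
    (hanti.cauchySeq_series_mul_of_tendsto_zero_of_bounded hzero
      (z := fun i : ℕ => A.indicator 1 ((i : ℤ) + 1) - d) h)
  have hlim := (tendsto_inv_atTop_zero.comp tendsto_log_natCast_atTop).mul
    (hR.add (Real.tendsto_harmonic_sub_log.const_mul d)) |>.add_const d
  rw [zero_mul, zero_add] at hlim
  refine hlim.congr' ?_
  filter_upwards [tendsto_log_natCast_atTop.eventually_ne_atTop 0] with n hn
  have hharm : (harmonic n : ℝ) = ∑ i ∈ Finset.range n, ((i : ℝ) + 1)⁻¹ := by simp [harmonic]
  simp only [logWeight_eq_sum_range, Function.comp_apply, smul_eq_mul, mul_sub,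
    Finset.sum_sub_distrib, ← Finset.sum_mul, hharm]
  field_simp
  ring

theorem hasLogDensity_univ : HasLogDensity univ 1 :=
  hasLogDensity_of_abs_sum_range_le (C := 0) (by simp)

theorem hasLogDensity_of_periodic {A : Set ℤ} {L : ℕ} (hL : 0 < L)
    (hA : Function.Periodic (· ∈ A) (L : ℤ)) :
    HasLogDensity A ((∑ i ∈ Finset.range L, A.indicator 1 (i : ℤ)) / L) := by
  have hind : Function.Periodic (A.indicator (1 : ℤ → ℝ)) L := fun n => by
    simp only [indicator_apply, hA n, Pi.one_apply]
  set d : ℝ := (∑ i ∈ Finset.range L, A.indicator 1 (i : ℤ)) / L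
  obtain ⟨C, hC⟩ := exists_norm_sum_range_le_of_periodic hL
    (f := fun k => A.indicator 1 (k + 1) - d)
    (fun n => by dsimp only; rw [add_right_comm, hind]) (by
      have hshift := sum_range_add_eq_of_periodic hind 1
      simp only [add_comm (1 : ℤ)] at hshift
      simp [hshift, d, hL.ne', mul_div_cancel₀])
  exact hasLogDensity_of_abs_sum_range_le hC

namespace HasLogDensity

variable {A : Set ℤ} {d : ℝ}

theorem logDensLow_eq (h : HasLogDensity A d) : logDensLow A = d := h.liminf_eq

theorem compl (h : HasLogDensity A d) : HasLogDensity Aᶜ (1 - d) :=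
  (hasLogDensity_univ.sub h).congr fun n => (logWeight_compl A n).symm

end HasLogDensity

theorem isBoundedUnder_ge_logWeight (A : Set ℤ) : IsBoundedUnder (· ≥ ·) atTop (logWeight A) :=
  isBoundedUnder_of ⟨0, logWeight_nonneg A⟩

theorem isBoundedUnder_le_logWeight (A : Set ℤ) : IsBoundedUnder (· ≤ ·) atTop (logWeight A) :=
  hasLogDensity_univ.isBoundedUnder_le.mono_le (.of_forall (logWeight_mono (subset_univ A)))

theorem logDensLow_mono {A A' : Set ℤ} (h : A ⊆ A') : logDensLow A ≤ logDensLow A' :=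
  liminf_le_liminf (.of_forall (logWeight_mono h)) (isBoundedUnder_ge_logWeight A)
    (isBoundedUnder_le_logWeight A').isCoboundedUnder_ge

theorem exists_le_sum_range_of_lt_logDensLow {A : Set ℤ} {c : ℝ} (hc : c < logDensLow A) :
    ∃ K, ∀ n : ℕ,
      K ≤ ∑ i ∈ Finset.range n, ((i : ℝ) + 1)⁻¹ * (A.indicator 1 ((i : ℤ) + 1) - c) := by
  obtain ⟨c', hcc', hc'⟩ := exists_between hc
  have huniv : Tendsto (fun n => c * logWeight univ n) atTop (𝓝 c) := by
    simpa using hasLogDensity_univ.const_mul c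
  have hpos : ∀ᶠ n : ℕ in atTop,
      0 ≤ ∑ i ∈ Finset.range n, ((i : ℝ) + 1)⁻¹ * (A.indicator 1 ((i : ℤ) + 1) - c) := by
    filter_upwards [eventually_lt_of_lt_liminf hc' (isBoundedUnder_ge_logWeight A),
      huniv.eventually_lt_const hcc', tendsto_log_natCast_atTop.eventually_gt_atTop 0]
      with n hA hn hlog
    have hlt := hn.trans hA
    rw [logWeight_eq_sum_range, logWeight_eq_sum_range, mul_left_comm,
      mul_lt_mul_iff_right₀ (inv_pos.2 hlog)] at hlt
    simp only [indicator_univ, Pi.one_apply, mul_one] at hlt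
    simp only [mul_sub, Finset.sum_sub_distrib, ← Finset.sum_mul]
    linarith
  obtain ⟨K, hK⟩ := (isBoundedUnder_of_eventually_ge hpos).bddBelow_range
  exact ⟨K, fun n => hK (mem_range_self n)⟩

/-! ### The zeta distribution -/

theorem measure_mul_measure_univ_le_mconv {M : Type*} [Monoid M] [MeasurableSpace M]
    [MeasurableMul₂ M] (μ ν : Measure M) [SFinite ν] {A : Set M} (hA : MeasurableSet A)
    (hmul : ∀ a ∈ A, ∀ x, a * x ∈ A) : μ A * ν univ ≤ (μ ∗ₘ ν) A := by
  rw [Measure.mconv, Measure.map_apply measurable_mul hA, ← Measure.prod_prod]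
  exact measure_mono fun x hx => hmul _ hx.1 _

theorem mconv_univ {M : Type*} [Monoid M] [MeasurableSpace M] [MeasurableMul₂ M]
    (μ ν : Measure M) [SFinite ν] : (μ ∗ₘ ν) univ = μ univ * ν univ := by
  rw [Measure.mconv, Measure.map_apply measurable_mul .univ, preimage_univ, ← univ_prod_univ,
    Measure.prod_prod]

theorem tsum_prod_eq_tsum_sum_divisorsAntidiagonal {F : ℕ × ℕ → ℝ≥0∞}
    (hF : ∀ p, p.1 * p.2 = 0 → F p = 0) :
    ∑' p, F p = ∑' n : ℕ, ∑ p ∈ n.divisorsAntidiagonal, F p := by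
  rw [← ENNReal.tsum_fiberwise F fun p => p.1 * p.2]
  refine tsum_congr fun n => ?_
  rcases eq_or_ne n 0 with rfl | hn
  · simpa using fun a b hab => hF (a, b) (by simpa using hab)
  · rw [show (fun p : ℕ × ℕ => p.1 * p.2) ⁻¹' {n} = n.divisorsAntidiagonal by ext; simp [hn]]
    exact Finset.tsum_subtype' _ _

/-- The measure on `ℤ` giving each positive integer `n` the mass `f n`. It turns Dirichlet
convolution into multiplicative convolution of measures. -/
def dirichletMeasure (f : ArithmeticFunction ℝ≥0) : Measure ℤ :=
  Measure.sum fun n : ℕ => (f n : ℝ≥0∞) • Measure.dirac (n : ℤ)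

section dirichletMeasure

variable (f g : ArithmeticFunction ℝ≥0)

instance : SFinite (dirichletMeasure f) := by
  unfold dirichletMeasure
  infer_instance

theorem lintegral_dirichletMeasure (φ : ℤ → ℝ≥0∞) :
    ∫⁻ x, φ x ∂dirichletMeasure f = ∑' n : ℕ, (f n : ℝ≥0∞) * φ n := by
  simp only [dirichletMeasure, lintegral_sum_measure, lintegral_smul_measure, lintegral_dirac,
    smul_eq_mul]

theorem dirichletMeasure_apply (A : Set ℤ) :
    dirichletMeasure f A = ∑' n : ℕ, (f n : ℝ≥0∞) * A.indicator 1 (n : ℤ) := by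
  rw [← lintegral_indicator_one .of_discrete, lintegral_dirichletMeasure]

theorem dirichletMeasure_mul :
    dirichletMeasure (f * g) = dirichletMeasure f ∗ₘ dirichletMeasure g := by
  refine Measure.ext_of_lintegral _ fun φ hφ => ?_
  rw [Measure.lintegral_mconv hφ]
  simp only [lintegral_dirichletMeasure, ← ENNReal.tsum_mul_left]
  rw [← ENNReal.tsum_prod, tsum_prod_eq_tsum_sum_divisorsAntidiagonal]
  · refine tsum_congr fun n => ?_
    rw [ArithmeticFunction.mul_apply, ENNReal.ofNNReal_finsetSum, Finset.sum_mul]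
    refine Finset.sum_congr rfl fun p hp => ?_
    rw [← (Nat.mem_divisorsAntidiagonal.1 hp).1]
    push_cast
    rw [mul_assoc]
  · rintro ⟨m, n⟩ hmn
    obtain rfl | rfl : m = 0 ∨ n = 0 := mul_eq_zero.1 hmn <;> simp

variable {f}

theorem isFiniteMeasure_dirichletMeasure (hf : Summable f) :
    IsFiniteMeasure (dirichletMeasure f) where
  measure_univ_lt_top := by
    simpa [dirichletMeasure_apply] using (ENNReal.tsum_coe_ne_top_iff_summable.2 hf).lt_top

theorem hasSum_dirichletMeasure_real (hf : Summable f) (A : Set ℤ) :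
    HasSum (fun n : ℕ => (f n : ℝ) * A.indicator 1 (n : ℤ)) ((dirichletMeasure f).real A) := by
  have := isFiniteMeasure_dirichletMeasure hf
  have hfin : ∑' n : ℕ, (f n : ℝ≥0∞) * A.indicator 1 (n : ℤ) ≠ ∞ := by
    rw [← dirichletMeasure_apply]
    exact measure_ne_top _ A
  have hsum := ENNReal.hasSum_toReal hfin
  rw [← ENNReal.tsum_toReal_eq (ENNReal.ne_top_of_tsum_ne_top hfin),
    ← dirichletMeasure_apply] at hsum
  simpa [Measure.real, indicator_apply, apply_ite] using hsum

end dirichletMeasure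

/-- The arithmetic function `n ↦ n⁻ˢ`, with sum `ζ(s)`. It takes values in `ℝ≥0`, so as to define a
measure. -/
def rpowNeg (s : ℝ) : ArithmeticFunction ℝ≥0 := toArithmeticFunction fun n => (n : ℝ≥0) ^ (-s)

theorem rpowNeg_apply (s : ℝ) {n : ℕ} (hn : n ≠ 0) : rpowNeg s n = (n : ℝ≥0) ^ (-s) :=
  if_neg hn

theorem isMultiplicative_rpowNeg (s : ℝ) : (rpowNeg s).IsMultiplicative := by
  rw [ArithmeticFunction.IsMultiplicative.iff_ne_zero]
  refine ⟨by simp [rpowNeg_apply], fun hm hn _ => ?_⟩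
  rw [rpowNeg_apply s hm, rpowNeg_apply s hn, rpowNeg_apply s (mul_ne_zero hm hn), Nat.cast_mul,
    NNReal.mul_rpow]

theorem rpowNeg_pow (s : ℝ) {p : ℕ} (hp : p ≠ 0) (k : ℕ) :
    rpowNeg s (p ^ k) = rpowNeg s p ^ k := by
  rw [rpowNeg_apply s (pow_ne_zero k hp), rpowNeg_apply s hp, Nat.cast_pow, ← NNReal.rpow_natCast,
    ← NNReal.rpow_natCast, ← NNReal.rpow_mul, ← NNReal.rpow_mul, mul_comm]

theorem rpowNeg_mul_rpowNeg (s t : ℝ) (n : ℕ) :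
    rpowNeg s n * rpowNeg t n = rpowNeg (s + t) n := by
  rcases eq_or_ne n 0 with rfl | hn
  · simp
  · rw [rpowNeg_apply s hn, rpowNeg_apply t hn, rpowNeg_apply _ hn,
      ← NNReal.rpow_add (by exact_mod_cast hn), neg_add]

theorem rpowNeg_le_one {s : ℝ} (hs : 0 ≤ s) (n : ℕ) : rpowNeg s n ≤ 1 := by
  rcases eq_or_ne n 0 with rfl | hn
  · simp
  · rw [rpowNeg_apply s hn]
    exact NNReal.rpow_le_one_of_one_le_of_nonpos
      (by exact_mod_cast Nat.one_le_iff_ne_zero.2 hn) (neg_nonpos.2 hs)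

theorem summable_rpowNeg {s : ℝ} (hs : 1 < s) : Summable (rpowNeg s) := by
  refine (NNReal.summable_rpow.2 (neg_lt_neg hs)).congr fun n => ?_
  rcases eq_or_ne n 0 with rfl | hn
  · simp [NNReal.zero_rpow (show -s ≠ 0 by linarith)]
  · rw [rpowNeg_apply s hn]

-- The quotient `ζ(t) / ζ(s)` has the Euler factors `(1 - p⁻ˢ) / (1 - p⁻ᵗ)`, whose power series in
-- `p⁻ᵗ` has the nonnegative coefficients `1, 1 - q, 1 - q, …`, where `q = p ^ (t - s) ≤ 1`.
theorem exists_rpowNeg_mul_eq {s t : ℝ} (hts : t ≤ s) :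
    ∃ h : ArithmeticFunction ℝ≥0, rpowNeg s * h = rpowNeg t := by
  set g : ArithmeticFunction ℝ≥0 := .prodPrimeFactors fun p => 1 - rpowNeg (s - t) p
  have hg : g.IsMultiplicative := .prodPrimeFactors _
  have hmul := (isMultiplicative_rpowNeg t).pmul hg
  refine ⟨(rpowNeg t).pmul g, (ArithmeticFunction.IsMultiplicative.eq_iff_eq_on_prime_powers _
    ((isMultiplicative_rpowNeg s).mul hmul) _ (isMultiplicative_rpowNeg t)).2 fun p k hp => ?_⟩
  set q := rpowNeg (s - t) p
  have hq : q ≤ 1 := rpowNeg_le_one (sub_nonneg.2 hts) p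
  have hs : rpowNeg s p = q * rpowNeg t p := by rw [rpowNeg_mul_rpowNeg, sub_add_cancel]
  have hterm : ∀ i ∈ Finset.range k, rpowNeg s (p ^ i) * (rpowNeg t).pmul g (p ^ k / p ^ i) =
      rpowNeg t p ^ k * (q ^ i * (1 - q)) := by
    intro i hi
    have hik := Finset.mem_range.1 hi
    have hgp : g (p ^ (k - i)) = 1 - q := by
      rw [ArithmeticFunction.prodPrimeFactors_apply (pow_ne_zero _ hp.ne_zero),
        Nat.primeFactors_prime_pow (Nat.sub_ne_zero_of_lt hik) hp, Finset.prod_singleton]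
    rw [Nat.pow_div hik.le hp.pos, ArithmeticFunction.pmul_apply, hgp, rpowNeg_pow _ hp.ne_zero,
      rpowNeg_pow _ hp.ne_zero, hs, ← Nat.add_sub_cancel' hik.le, pow_add, Nat.add_sub_cancel_left,
      mul_pow]
    ring
  have hlast : rpowNeg s (p ^ k) * (rpowNeg t).pmul g (p ^ k / p ^ k) =
      rpowNeg t p ^ k * q ^ k := by
    rw [Nat.div_self (pow_pos hp.pos k), hmul.map_one, rpowNeg_pow _ hp.ne_zero, hs, mul_pow]
    ring
  rw [ArithmeticFunction.mul_apply,
    Nat.sum_divisorsAntidiagonal (rpowNeg s · * (rpowNeg t).pmul g ·),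
    Nat.sum_divisors_prime_pow hp, Finset.sum_range_succ, Finset.sum_congr rfl hterm, hlast,
    ← Finset.mul_sum, ← Finset.sum_mul, geom_sum_mul_of_le_one hq, ← mul_add,
    tsub_add_cancel_of_le (pow_le_one' hq k), mul_one, rpowNeg_pow _ hp.ne_zero]

/-- The zeta distribution on `ℤ`: a positive integer `n` has probability `n⁻ˢ / ζ(s)`. It is a
probability measure for `1 < s`. -/
def zetaDist (s : ℝ) : Measure ℤ :=
  (dirichletMeasure (rpowNeg s) univ)⁻¹ • dirichletMeasure (rpowNeg s)

theorem dirichletMeasure_univ_ne_zero {f : ArithmeticFunction ℝ≥0} (hf : f ≠ 0) :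
    dirichletMeasure f univ ≠ 0 := by
  obtain ⟨n, hn⟩ := DFunLike.ne_iff.1 hf
  simpa [dirichletMeasure_apply] using ⟨n, hn⟩

theorem rpowNeg_ne_zero (s : ℝ) : rpowNeg s ≠ 0 :=
  DFunLike.ne_iff.2 ⟨1, by simp [(isMultiplicative_rpowNeg s).map_one]⟩

section zetaDist

variable {A : Set ℤ} {s t : ℝ}

theorem isProbabilityMeasure_zetaDist (hs : 1 < s) : IsProbabilityMeasure (zetaDist s) := by
  have := isFiniteMeasure_dirichletMeasure (summable_rpowNeg hs)
  have : NeZero (dirichletMeasure (rpowNeg s)) :=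
    ⟨fun h => dirichletMeasure_univ_ne_zero (rpowNeg_ne_zero s) (by simp [h])⟩
  exact isProbabilityMeasureSMul

theorem zetaDist_real (s : ℝ) (A : Set ℤ) :
    (zetaDist s).real A =
      (dirichletMeasure (rpowNeg s)).real A / (dirichletMeasure (rpowNeg s)).real univ := by
  simp [zetaDist, Measure.real, div_eq_inv_mul]

theorem dirichletMeasure_rpowNeg_real_univ_pos (hs : 1 < s) :
    0 < (dirichletMeasure (rpowNeg s)).real univ := by
  have := isFiniteMeasure_dirichletMeasure (summable_rpowNeg hs)
  exact ENNReal.toReal_pos (dirichletMeasure_univ_ne_zero (rpowNeg_ne_zero s)) (measure_ne_top _ _)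

theorem zetaDist_real_anti (hA : ∀ a ∈ A, ∀ x, a * x ∈ A) (ht : 1 < t) (hts : t ≤ s) :
    (zetaDist s).real A ≤ (zetaDist t).real A := by
  obtain ⟨h, hh⟩ := exists_rpowNeg_mul_eq hts
  have hs := ht.trans_le hts
  have := isFiniteMeasure_dirichletMeasure (summable_rpowNeg ht)
  have := isFiniteMeasure_dirichletMeasure (summable_rpowNeg hs)
  rw [zetaDist_real, zetaDist_real,
    div_le_div_iff₀ (dirichletMeasure_rpowNeg_real_univ_pos hs)
      (dirichletMeasure_rpowNeg_real_univ_pos ht)]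
  have hcross : dirichletMeasure (rpowNeg s) A * dirichletMeasure (rpowNeg t) univ ≤
      dirichletMeasure (rpowNeg t) A * dirichletMeasure (rpowNeg s) univ := by
    rw [← hh, dirichletMeasure_mul, mconv_univ, mul_left_comm, mul_comm]
    gcongr
    exact measure_mul_measure_univ_le_mconv _ _ .of_discrete hA
  simpa [Measure.real] using ENNReal.toReal_mono (by finiteness) hcross

theorem tendsto_dirichletMeasure_rpowNeg_real_univ :
    Tendsto (fun t => (dirichletMeasure (rpowNeg t)).real univ) (𝓝[>] 1) atTop := by
  have hinv : Tendsto (fun t : ℝ => (t - 1)⁻¹) (𝓝[>] 1) atTop :=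
    tendsto_inv_nhdsGT_zero.comp <| tendsto_nhdsWithin_iff.2
      ⟨tendsto_nhdsWithin_of_tendsto_nhds ((continuous_sub_right 1).tendsto' 1 0 (sub_self 1)),
        by filter_upwards [self_mem_nhdsWithin] with t (ht : 1 < t) using sub_pos.2 ht⟩
  refine (hinv.atTop_mul_pos one_pos tendsto_sub_mul_tsum_nat_rpow).congr' ?_
  filter_upwards [self_mem_nhdsWithin] with t (ht : 1 < t)
  rw [inv_mul_cancel_left₀ (sub_ne_zero.2 ht.ne'),
    ← (hasSum_dirichletMeasure_real (summable_rpowNeg ht) univ).tsum_eq]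
  refine tsum_congr fun n => ?_
  rcases eq_or_ne n 0 with rfl | hn
  · simp [Real.zero_rpow (one_pos.trans ht).ne']
  · simp [rpowNeg_apply t hn, Real.rpow_neg]

-- Abel summation: the terms of the Dirichlet series at `t` are those of the series at `1`, weighted
-- by the decreasing sequence `n ^ (1 - t)`.
theorem exists_le_dirichletMeasure_rpowNeg_sub {c : ℝ} (hc : c < logDensLow A) :
    ∃ K, ∀ t, 1 < t → K ≤
      (dirichletMeasure (rpowNeg t)).real A - c * (dirichletMeasure (rpowNeg t)).real univ := by
  obtain ⟨K, hK⟩ := exists_le_sum_range_of_lt_logDensLow hc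
  refine ⟨K, fun t ht => ?_⟩
  have hsum := (hasSum_dirichletMeasure_real (summable_rpowNeg ht) A).sub
    ((hasSum_dirichletMeasure_real (summable_rpowNeg ht) univ).mul_left c)
  rw [← hasSum_nat_add_iff' 1] at hsum
  simp only [Finset.sum_range_one, ArithmeticFunction.map_zero, NNReal.coe_zero, zero_mul,
    mul_zero, sub_zero] at hsum
  refine ge_of_tendsto' hsum.tendsto_sum_nat fun n => ?_
  have habel := mul_le_sum_range_mul_of_antitone hK
    (φ := fun i : ℕ => ((i : ℝ) + 1) ^ (1 - t))
    (fun i j hij => Real.rpow_le_rpow_of_nonpos (by positivity) (by gcongr) (by linarith))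
    (fun i => by positivity) n
  simp only [Nat.cast_zero, zero_add, Real.one_rpow, one_mul] at habel
  refine habel.trans_eq (Finset.sum_congr rfl fun i _ => ?_)
  have hpow : (rpowNeg t (i + 1) : ℝ) = ((i : ℝ) + 1) ^ (1 - t) * ((i : ℝ) + 1)⁻¹ := by
    rw [rpowNeg_apply t i.succ_ne_zero, ← Real.rpow_neg_one, ← Real.rpow_add (by positivity)]
    push_cast
    ring_nf
  rw [hpow]
  simp only [Nat.cast_add, Nat.cast_one, indicator_univ, Pi.one_apply]
  ring

theorem logDensLow_le_of_frequently_zetaDist_le {u : ℝ}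
    (h : ∃ᶠ t in 𝓝[>] 1, (zetaDist t).real A ≤ u) : logDensLow A ≤ u := by
  by_contra! hu
  obtain ⟨c, huc, hc⟩ := exists_between hu
  obtain ⟨K, hK⟩ := exists_le_dirichletMeasure_rpowNeg_sub hc
  have hbot := tendsto_dirichletMeasure_rpowNeg_real_univ.const_mul_atTop_of_neg (sub_neg.2 huc)
  refine h ?_
  filter_upwards [hbot.eventually_lt_atBot K, self_mem_nhdsWithin] with t hKt (ht : 1 < t) hle
  rw [zetaDist_real, div_le_iff₀ (dirichletMeasure_rpowNeg_real_univ_pos ht)] at hle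
  linarith [hK t ht]

theorem HasLogDensity.zetaDist_le {d : ℝ} (h : HasLogDensity A d)
    (hA : ∀ a ∈ A, ∀ x, a * x ∈ A) (hs : 1 < s) : (zetaDist s).real A ≤ d := by
  rw [← sub_le_sub_iff_left 1, ← h.compl.logDensLow_eq]
  refine logDensLow_le_of_frequently_zetaDist_le (Eventually.frequently ?_)
  filter_upwards [Ioc_mem_nhdsGT hs] with t ⟨ht, hts⟩
  have := isProbabilityMeasure_zetaDist ht
  rw [probReal_compl_eq_one_sub .of_discrete]
  exact sub_le_sub_left (zetaDist_real_anti hA ht hts) 1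

end zetaDist

/-! ### Sets of multiples -/

theorem mul_mem_multiplesZ (A : Set ℕ) : ∀ a ∈ multiplesZ A, ∀ x, a * x ∈ multiplesZ A :=
  fun _ ⟨b, hb, hba⟩ x => ⟨b, hb, hba.mul_right x⟩

theorem multiplesZ_mono : Monotone multiplesZ := fun _ _ hA _ ⟨b, hb, hbn⟩ => ⟨b, hA hb, hbn⟩

theorem multiplesZ_iUnion {ι : Sort*} (A : ι → Set ℕ) :
    multiplesZ (⋃ i, A i) = ⋃ i, multiplesZ (A i) := by
  ext n
  simp only [multiplesZ, mem_iUnion, mem_ofPred_eq, ← exists_and_right]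
  exact exists_comm

theorem exists_periodic_multiplesZ {F : Set ℕ} (hF : F.Finite) (hF0 : 0 ∉ F) :
    ∃ L : ℕ, 0 < L ∧ Function.Periodic (· ∈ multiplesZ F) (L : ℤ) := by
  refine ⟨∏ b ∈ hF.toFinset, b, Finset.prod_pos fun b hb => ?_, fun n => ?_⟩
  · exact Nat.pos_of_ne_zero fun hb0 => hF0 (hb0 ▸ hF.mem_toFinset.1 hb)
  · refine propext (exists_congr fun b => and_congr_right fun hb => ?_)
    exact Int.dvd_add_left (Int.natCast_dvd_natCast.2
      (Finset.dvd_prod_of_mem _ (hF.mem_toFinset.2 hb)))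

theorem tendsto_logDensLow_multiplesZ_inter_Iic {A : Set ℕ} (hA : 0 ∉ A) :
    Tendsto (fun N => logDensLow (multiplesZ (A ∩ Iic N))) atTop
      (𝓝 (logDensLow (multiplesZ A))) := by
  refine tendsto_atTop_isLUB (fun N N' hN => logDensLow_mono (multiplesZ_mono (by gcongr)))
    ⟨?_, fun u hu => ?_⟩
  · rintro _ ⟨N, rfl⟩
    exact logDensLow_mono (multiplesZ_mono inter_subset_left)
  refine logDensLow_le_of_frequently_zetaDist_le (Eventually.frequently ?_)
  filter_upwards [self_mem_nhdsWithin] with s (hs : 1 < s)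
  have := isProbabilityMeasure_zetaDist hs
  have htrunc : ∀ N, (zetaDist s).real (multiplesZ (A ∩ Iic N)) ≤ u := fun N => by
    obtain ⟨L, hL, hper⟩ :=
      exists_periodic_multiplesZ ((finite_Iic N).inter_of_right A) (fun h => hA h.1)
    have hdens := hasLogDensity_of_periodic hL hper
    exact (hdens.zetaDist_le (mul_mem_multiplesZ _) hs).trans
      (hdens.logDensLow_eq.symm.trans_le (hu (mem_range_self N)))
  have hcont := tendsto_measure_iUnion_atTop (μ := zetaDist s)
    (s := fun N => multiplesZ (A ∩ Iic N)) fun N N' hN => multiplesZ_mono (by gcongr)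
  rw [← multiplesZ_iUnion, ← inter_iUnion, iUnion_Iic, inter_univ] at hcont
  exact le_of_tendsto' ((ENNReal.tendsto_toReal (measure_ne_top _ _)).comp hcont) htrunc

/-! ### Haar measure of windows -/

theorem hasLogDensity_preimage_of_isClopen {G : Type*} [AddGroup G] [TopologicalSpace G]
    [ContinuousAdd G] [MeasurableSpace G] [BorelSpace G] {μ : Measure G} [μ.IsAddLeftInvariant]
    [IsProbabilityMeasure μ] {φ : ℤ →+ G} (hφ : DenseRange φ) {S : Set G} (hS : IsClopen S)
    {L : ℕ} (hL : 0 < L) (hper : Function.Periodic (· ∈ φ ⁻¹' S) (L : ℤ)) :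
    HasLogDensity (φ ⁻¹' S) (μ.real S) := by
  have hind : Function.Periodic (fun n => S.indicator (1 : G → ℝ) (φ n)) L := fun n => by
    have hmem : (φ (n + L) ∈ S) = (φ n ∈ S) := hper n
    simp only [indicator_apply, hmem, Pi.one_apply]
  have hcont : Continuous (S.indicator (1 : G → ℝ)) := hS.continuous_indicator continuous_one
  have hconst : (fun h => ∑ i ∈ Finset.range L, S.indicator (1 : G → ℝ) (φ i + h)) =
      fun _ => ∑ i ∈ Finset.range L, S.indicator 1 (φ i) :=
    hφ.equalizer (by fun_prop) (by fun_prop) <| funext fun m => by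
      simpa [← map_add, add_comm] using sum_range_add_eq_of_periodic hind m
  have hint : Integrable (S.indicator (1 : G → ℝ)) μ :=
    (integrable_const 1).indicator hS.isOpen.measurableSet
  have hmean : L * μ.real S = ∑ i ∈ Finset.range L, S.indicator 1 (φ i) := by
    calc L * μ.real S
        = ∑ i ∈ Finset.range L, ∫ h, S.indicator (1 : G → ℝ) (φ i + h) ∂μ := by
          simp only [integral_add_left_eq_self (S.indicator (1 : G → ℝ)),
            integral_indicator_one hS.isOpen.measurableSet, Finset.sum_const, Finset.card_range,
            nsmul_eq_mul]
      _ = ∫ h, ∑ i ∈ Finset.range L, S.indicator (1 : G → ℝ) (φ i + h) ∂μ :=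
          by rw [integral_finsetSum _ fun i _ => hint.comp_add_left _]
      _ = ∑ i ∈ Finset.range L, S.indicator 1 (φ i) := by rw [hconst]; simp
  rw [eq_div_of_mul_eq (Nat.cast_ne_zero.2 hL.ne') ((mul_comm _ _).trans hmean)]
  exact hasLogDensity_of_periodic hL hper

instance (B : Set ℕ) [∀ b : B, NeZero (b : ℕ)] : (mH B).IsAddHaarMeasure := by
  unfold mH
  infer_instance

instance (B : Set ℕ) [∀ b : B, NeZero (b : ℕ)] : IsProbabilityMeasure (mH B) :=
  ⟨Measure.addHaarMeasure_self (K₀ := ⊤)⟩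

/-- The diagonal embedding `Δ`, as a homomorphism from `ℤ` to the closure `H` of its image, where
its range is dense. -/
def toHgrp (B : Set ℕ) : ℤ →+ Hgrp B :=
  (diagEmb B).codRestrict (Hgrp B) fun n => AddSubgroup.le_topologicalClosure _ ⟨n, rfl⟩

theorem denseRange_toHgrp (B : Set ℕ) : DenseRange (toHgrp B) := by
  rw [DenseRange, Subtype.dense_iff, ← range_comp]
  exact subset_rfl

theorem isClosed_Wset (B A : Set ℕ) : IsClosed (Wset B A) := by
  simp only [Wset, ofPred_forall]
  exact isClosed_iInter fun b => isClosed_iInter fun _ => (isClosed_discrete {0}ᶜ).preimage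
    ((continuous_apply b).comp continuous_subtype_val)

theorem isOpen_Wset_of_finite (B : Set ℕ) {F : Set ℕ} (hF : F.Finite) : IsOpen (Wset B F) := by
  have hF' : {b : B | (b : ℕ) ∈ F}.Finite := hF.preimage Subtype.val_injective.injOn
  simp only [Wset, ofPred_forall]
  exact hF'.isOpen_biInter fun b _ => (isOpen_discrete {0}ᶜ).preimage
    ((continuous_apply b).comp continuous_subtype_val)

theorem Wset_iUnion {ι : Sort*} (B : Set ℕ) (A : ι → Set ℕ) :
    Wset B (⋃ i, A i) = ⋂ i, Wset B (A i) := by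
  ext h
  simp only [Wset, mem_iUnion, mem_iInter, mem_ofPred_eq, forall_exists_index]
  exact forall_comm

theorem Wset_anti (B : Set ℕ) : Antitone (Wset B) := fun _ _ hA _ hh b hb => hh b (hA hb)

theorem preimage_toHgrp_compl_Wset {A B : Set ℕ} (hA : A ⊆ B) :
    toHgrp B ⁻¹' (Wset B A)ᶜ = multiplesZ A := by
  ext n
  simp only [mem_preimage, Wset, mem_compl_iff, mem_ofPred_eq, not_forall, not_not]
  constructor
  · rintro ⟨b, hb, hbn⟩
    exact ⟨b, hb, (ZMod.intCast_zmod_eq_zero_iff_dvd n b).1 hbn⟩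
  · rintro ⟨b, hb, hbn⟩
    exact ⟨⟨b, hA hb⟩, hb, (ZMod.intCast_zmod_eq_zero_iff_dvd n b).2 hbn⟩

section Haar

variable {A B : Set ℕ} [∀ b : B, NeZero (b : ℕ)]

theorem zero_notMem_of_subset (hA : A ⊆ B) : 0 ∉ A :=
  fun h0 => NeZero.ne ((⟨0, hA h0⟩ : B) : ℕ) rfl

theorem hasLogDensity_multiplesZ_of_finite {F : Set ℕ} (hFB : F ⊆ B) (hF : F.Finite) :
    HasLogDensity (multiplesZ F) ((mH B).real (Wset B F)ᶜ) := by
  obtain ⟨L, hL, hper⟩ := exists_periodic_multiplesZ hF (zero_notMem_of_subset hFB)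
  rw [← preimage_toHgrp_compl_Wset hFB] at hper ⊢
  exact hasLogDensity_preimage_of_isClopen (denseRange_toHgrp B)
    (IsClopen.compl ⟨isClosed_Wset B F, isOpen_Wset_of_finite B hF⟩) hL hper

theorem logDensLow_multiplesZ (hA : A ⊆ B) :
    logDensLow (multiplesZ A) = 1 - (mH B).real (Wset B A) := by
  have htrunc : ∀ N, logDensLow (multiplesZ (A ∩ Iic N)) = (mH B).real (Wset B (A ∩ Iic N))ᶜ :=
    fun N => (hasLogDensity_multiplesZ_of_finite (inter_subset_left.trans hA)
      ((finite_Iic N).inter_of_right A)).logDensLow_eq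
  have hcont := tendsto_measure_iUnion_atTop (μ := mH B) (s := fun N => (Wset B (A ∩ Iic N))ᶜ)
    fun N N' hN => compl_subset_compl.2 (Wset_anti B (by gcongr))
  rw [← compl_iInter, ← Wset_iUnion, ← inter_iUnion, iUnion_Iic, inter_univ] at hcont
  have hlim := tendsto_logDensLow_multiplesZ_inter_Iic (zero_notMem_of_subset hA)
  simp only [htrunc] at hlim
  rw [← probReal_compl_eq_one_sub (isClosed_Wset B A).measurableSet]
  exact tendsto_nhds_unique hlim ((ENNReal.tendsto_toReal (measure_ne_top _ _)).comp hcont)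

end Haar

theorem Btilde_subset (B : Set ℕ) (N : ℕ) : Btilde B N ⊆ B := sep_subset _ _

theorem Btilde_anti (B : Set ℕ) : Antitone (Btilde B) :=
  fun _ _ hN _ hb => ⟨hb.1, fun p hp hpb => hN.trans_lt (hb.2 p hp hpb)⟩

theorem tendsto_logDensity_btilde_general (B : Set ℕ) [∀ b : B, NeZero (b : ℕ)]
    {A : ℕ → Set ℕ} (hA : Antitone A) (hAB : ∀ N, A N ⊆ B) :
    Tendsto (fun N : ℕ => logDensLow (multiplesZ (A N))) atTop
      (𝓝 (1 - (mH B (⋃ N : ℕ, Wset B (A N))).toReal)) := by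
  simp only [logDensLow_multiplesZ (hAB _)]
  exact ((ENNReal.tendsto_toReal (measure_ne_top _ _)).comp
    (tendsto_measure_iUnion_atTop ((Wset_anti B).comp hA))).const_sub 1

/-- `lim_{N→∞} δ(M_{B̃^(N)}) = 1 − m_H(W_∞)`. -/
theorem tendsto_logDensity_btilde (B : Set ℕ) [∀ b : B, NeZero (b : ℕ)] (hprim : Primitive B) :
    Tendsto (fun N : ℕ => logDensLow (multiplesZ (Btilde B N))) atTop
      (𝓝 (1 - (mH B (⋃ N : ℕ, Wset B (Btilde B N))).toReal)) :=
  tendsto_logDensity_btilde_general B (Btilde_anti B) (Btilde_subset B)
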